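/- The open set condition fails for {S_i}_{i=1}^m if and only if there exist a positive integer M and finite words α₀,…,α_M and β₀,…,β_M over {1,…,m} with 1 ≤ p_{α_k}, p_{β_k} ≤ 2T−1 for all k, with α₀ and β₀ single letters and α₀ ≠ β₀, such that the sequence (q_k, c_k)_{k=1}^{M+1} with the recursive structure w.r.t. ({α_k},{β_k}) satisfies (q_{M+1}, c_{M+1}) = (0,0) and (q_k, c_k) ∈ Ξ for all 1 ≤ k ≤ M+1. -/

import Mathlib

open Polynomial Filter

noncomputable section

namespace PVOSC

variable {m : ℕ}

/-- `λ⁻¹` is a Pisot (P.V.) number: an algebraic integer `> 1` all of whose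
Galois conjugates other than itself have complex absolute value `< 1`. -/
def IsPisot (θ : ℝ) : Prop :=
  1 < θ ∧ IsIntegral ℤ θ ∧
    ∀ z : ℂ, aeval z (minpoly ℤ θ) = 0 → z ≠ (θ : ℂ) → ‖z‖ < 1

/-- `p_σ` for a finite word `σ`. -/
def wordP (p : Fin m → ℕ) (σ : List (Fin m)) : ℕ := (σ.map p).sum

/-- The contracting similitude `S_i(x) = λ^{p_i} x + b_i`. -/
def Smap (lam : ℝ) (p : Fin m → ℕ) (b : Fin m → ℝ) (i : Fin m) : ℝ → ℝ :=
  fun x => lam ^ p i * x + b i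

/-- `S_σ = S_{i₁} ∘ ⋯ ∘ S_{i_k}` for `σ = i₁ ⋯ i_k`. -/
def SW (lam : ℝ) (p : Fin m → ℕ) (b : Fin m → ℝ) (σ : List (Fin m)) : ℝ → ℝ :=
  σ.foldr (fun i f => Smap lam p b i ∘ f) id

/-- `b_σ`, the translation part of `S_σ`. -/
def wordB (lam : ℝ) (p : Fin m → ℕ) (b : Fin m → ℝ) (σ : List (Fin m)) : ℝ :=
  SW lam p b σ 0

/-- `B = {0, b₁, …, b_m}`. -/
def Bset (b : Fin m → ℝ) : Set ℝ := insert 0 (Set.range b)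

/-- `B − B`. -/
def BB (b : Fin m → ℝ) : Set ℝ := {x | ∃ u ∈ Bset b, ∃ v ∈ Bset b, x = u - v}

/-- `max_i |b_i|`. -/
def bmax (b : Fin m → ℝ) : ℝ := ⨆ i, |b i|

/-- The set `𝒞`. -/
def Cset (lam : ℝ) (b : Fin m → ℝ) (T : ℕ) : Set ℝ :=
  {x | |x| ≤ (1 + lam ^ (1 - (T : ℤ))) * bmax b / (1 - lam) ∧
    ∃ R : ℝ[X], (∀ n, R.coeff n ∈ BB b) ∧ lam ^ (2 - (T : ℤ)) * x = R.eval lam⁻¹}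

/-- The vertex set `Ξ = {n ∈ ℤ : |n| ≤ T−1} × 𝒞`. -/
def Xi (lam : ℝ) (b : Fin m → ℝ) (T : ℕ) : Set (ℤ × ℝ) :=
  {v | |v.1| ≤ (T : ℤ) - 1 ∧ v.2 ∈ Cset lam b T}

/-- The open set condition. -/
def OSC (lam : ℝ) (p : Fin m → ℕ) (b : Fin m → ℝ) : Prop :=
  ∃ U : Set ℝ, U.Nonempty ∧ IsOpen U ∧ (⋃ i, Smap lam p b i '' U) ⊆ U ∧
    ∀ i j : Fin m, i ≠ j → Smap lam p b i '' U ∩ Smap lam p b j '' U = ∅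

/-- The strong separation condition for the attractor `E`. -/
def SSC (lam : ℝ) (p : Fin m → ℕ) (b : Fin m → ℝ) (E : Set ℝ) : Prop :=
  ∀ i j : Fin m, i ≠ j → Smap lam p b i '' E ∩ Smap lam p b j '' E = ∅

/-- Group law on `ℤ × ℝ`: `(p₁,c₁)·(p₂,c₂) = (p₁+p₂, λ^{p₁} c₂ + c₁)`. -/
def gmul (lam : ℝ) (u v : ℤ × ℝ) : ℤ × ℝ := (u.1 + v.1, lam ^ u.1 * v.2 + u.2)

/-- Inverse for the group law: `(p,c)⁻¹ = (−p, −λ^{−p} c)`. -/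
def ginv (lam : ℝ) (u : ℤ × ℝ) : ℤ × ℝ := (-u.1, -(lam ^ (-u.1) * u.2))

/-- The group element `(p_σ, b_σ)` associated to a finite word `σ`. -/
def elem (lam : ℝ) (p : Fin m → ℕ) (b : Fin m → ℝ) (σ : List (Fin m)) : ℤ × ℝ :=
  ((wordP p σ : ℤ), wordB lam p b σ)

/-- The sequence `(q_k, c_k)` with the recursive structure w.r.t. `({α_k}, {β_k})`:
`recSeq … k = (q_{k+1}, c_{k+1})`, i.e. index `k` corresponds to `(q_{k+1}, c_{k+1})`. -/
def recSeq (lam : ℝ) (p : Fin m → ℕ) (b : Fin m → ℝ) (α β : ℕ → List (Fin m)) : ℕ → ℤ × ℝ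
  | 0 => gmul lam (ginv lam (elem lam p b (β 0))) (elem lam p b (α 0))
  | (k+1) => gmul lam (ginv lam (elem lam p b (β (k+1))))
      (gmul lam (recSeq lam p b α β k) (elem lam p b (α (k+1))))

/-- The edge relation of the directed graph `G` on `Ξ`. -/
def edge (lam : ℝ) (p : Fin m → ℕ) (b : Fin m → ℝ) (T : ℕ) (u v : ℤ × ℝ) : Prop :=
  u ∈ Xi lam b T ∧ v ∈ Xi lam b T ∧
    ∃ α β : List (Fin m), 1 ≤ wordP p α ∧ wordP p α ≤ 2 * T - 1 ∧
      1 ≤ wordP p β ∧ wordP p β ≤ 2 * T - 1 ∧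
      v.1 = (wordP p α : ℤ) + u.1 - (wordP p β : ℤ) ∧
      v.2 = lam ^ (-(wordP p β : ℤ)) * u.2 + lam ^ (u.1 - (wordP p β : ℤ)) * wordB lam p b α
        - lam ^ (-(wordP p β : ℤ)) * wordB lam p b β

/-- `Λ = Ξ ∩ {(p_j − p_i, λ^{−p_i}(b_j − b_i)) : i ≠ j}`. -/
def Lam (lam : ℝ) (p : Fin m → ℕ) (b : Fin m → ℝ) (T : ℕ) : Set (ℤ × ℝ) :=
  Xi lam b T ∩ {v | ∃ i j : Fin m, i ≠ j ∧
    v = ((p j : ℤ) - (p i : ℤ), lam ^ (-(p i : ℤ)) * (b j - b i))}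

/-- The length-`k` prefix of an infinite word `ω`. -/
def prefixList (ω : ℕ → Fin m) (k : ℕ) : List (Fin m) := (List.range k).map ω

theorem SW_cons (lam : ℝ) (p : Fin m → ℕ) (b : Fin m → ℝ) (i : Fin m) (σ : List (Fin m)) (x : ℝ) :
    SW lam p b (i :: σ) x = lam ^ p i * SW lam p b σ x + b i := rfl

theorem SW_append (lam : ℝ) (p : Fin m → ℕ) (b : Fin m → ℝ) (σ τ : List (Fin m)) (x : ℝ) :
    SW lam p b (σ ++ τ) x = SW lam p b σ (SW lam p b τ x) := by
  induction σ with
  | nil => rfl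
  | cons i σ ih => rw [List.cons_append, SW_cons, SW_cons, ih]

theorem wordP_cons (p : Fin m → ℕ) (i : Fin m) (σ : List (Fin m)) :
    wordP p (i :: σ) = p i + wordP p σ := by simp [wordP]

theorem wordP_nil (p : Fin m → ℕ) : wordP p [] = 0 := by simp [wordP]

theorem wordP_append (p : Fin m → ℕ) (σ τ : List (Fin m)) :
    wordP p (σ ++ τ) = wordP p σ + wordP p τ := by simp [wordP]

theorem wordB_nil (lam : ℝ) (p : Fin m → ℕ) (b : Fin m → ℝ) : wordB lam p b [] = 0 := rfl

theorem wordB_cons (lam : ℝ) (p : Fin m → ℕ) (b : Fin m → ℝ) (i : Fin m) (σ : List (Fin m)) :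
    wordB lam p b (i :: σ) = lam ^ p i * wordB lam p b σ + b i := rfl

theorem SW_eq (lam : ℝ) (p : Fin m → ℕ) (b : Fin m → ℝ) (σ : List (Fin m)) (x : ℝ) :
    SW lam p b σ x = lam ^ wordP p σ * x + wordB lam p b σ := by
  induction σ with
  | nil => simp [wordP, wordB, SW]
  | cons i σ ih => rw [SW_cons, ih, wordP_cons, wordB_cons, pow_add]; ring

theorem wordB_append (lam : ℝ) (p : Fin m → ℕ) (b : Fin m → ℝ) (σ τ : List (Fin m)) :
    wordB lam p b (σ ++ τ) = lam ^ wordP p σ * wordB lam p b τ + wordB lam p b σ := by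
  have h := SW_append lam p b σ τ 0
  rw [SW_eq lam p b σ] at h
  exact h

theorem wordP_pos (p : Fin m → ℕ) (hp : ∀ i, 1 ≤ p i) (σ : List (Fin m)) (h : σ ≠ []) :
    1 ≤ wordP p σ := by
  cases σ with
  | nil => exact absurd rfl h
  | cons i σ => rw [wordP_cons]; have := hp i; omega

theorem elem_eq_iff (lam : ℝ) (p : Fin m → ℕ) (b : Fin m → ℝ) (σ τ : List (Fin m)) :
    elem lam p b σ = elem lam p b τ ↔
      wordP p σ = wordP p τ ∧ wordB lam p b σ = wordB lam p b τ := by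
  simp [elem, Prod.ext_iff]

theorem le_bmax (b : Fin m → ℝ) (i : Fin m) : |b i| ≤ bmax b :=
  le_ciSup (f := fun i => |b i|) (Set.finite_range _).bddAbove i

theorem bmax_nonneg (b : Fin m → ℝ) : 0 ≤ bmax b :=
  Real.iSup_nonneg fun _ => abs_nonneg _

/-- invariance of an interval -/
theorem Smap_bound (lam : ℝ) (hlam0 : 0 < lam) (hlam1 : lam < 1) (p : Fin m → ℕ)
    (hp : ∀ i, 1 ≤ p i) (b : Fin m → ℝ) (R : ℝ) (hR : bmax b ≤ (1 - lam) * R) (i : Fin m) (x : ℝ) :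
    (|x| ≤ R → |lam ^ p i * x + b i| ≤ R) ∧ (|x| < R → |lam ^ p i * x + b i| < R) := by
  have h1 : |lam ^ p i * x + b i| ≤ lam * |x| + bmax b := by
    refine (abs_add_le _ _).trans (add_le_add ?_ (le_bmax b i))
    rw [abs_mul, abs_of_pos (pow_pos hlam0 _)]
    exact mul_le_mul_of_nonneg_right (pow_le_of_le_one hlam0.le hlam1.le (by have := hp i; omega))
      (abs_nonneg x)
  constructor <;> intro h <;> nlinarith

theorem SW_bound (lam : ℝ) (hlam0 : 0 < lam) (hlam1 : lam < 1) (p : Fin m → ℕ)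
    (hp : ∀ i, 1 ≤ p i) (b : Fin m → ℝ) (R : ℝ) (hR : bmax b ≤ (1 - lam) * R)
    (σ : List (Fin m)) (x : ℝ) (hx : |x| < R) : |SW lam p b σ x| < R := by
  induction σ with
  | nil => exact hx
  | cons i σ ih => rw [SW_cons]; exact (Smap_bound lam hlam0 hlam1 p hp b R hR i _).2 ih

theorem wordB_bound (lam : ℝ) (hlam0 : 0 < lam) (hlam1 : lam < 1) (p : Fin m → ℕ)
    (hp : ∀ i, 1 ≤ p i) (b : Fin m → ℝ) (σ : List (Fin m)) :
    |wordB lam p b σ| ≤ bmax b / (1 - lam) := by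
  have hl : 0 < 1 - lam := by linarith
  have hR : bmax b ≤ (1 - lam) * (bmax b / (1 - lam)) := by
    rw [mul_div_cancel₀ _ hl.ne']
  induction σ with
  | nil => rw [wordB_nil, abs_zero]; exact div_nonneg (bmax_nonneg b) hl.le
  | cons i σ ih => rw [wordB_cons]; exact (Smap_bound lam hlam0 hlam1 p hp b _ hR i _).1 ih

theorem exists_poly (lam : ℝ) (hlam0 : 0 < lam) (p : Fin m → ℕ)
    (hp : ∀ i, 1 ≤ p i) (b : Fin m → ℝ) (σ : List (Fin m)) :
    ∀ N : ℕ, wordP p σ ≤ N + 1 → ∃ Q : ℝ[X], (∀ n, Q.coeff n ∈ Bset b) ∧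
      (∀ n, N < n → Q.coeff n = 0) ∧ Q.eval lam⁻¹ = lam⁻¹ ^ N * wordB lam p b σ := by
  induction σ with
  | nil =>
    intro N _
    exact ⟨0, fun n => by simp [Bset], fun n _ => by simp, by simp [wordB_nil]⟩
  | cons i σ ih =>
    intro N hN
    rw [wordP_cons] at hN
    by_cases hσ : σ = []
    · subst hσ
      refine ⟨C (b i) * X ^ N, fun n => ?_, fun n hn => ?_, ?_⟩
      · rw [coeff_C_mul_X_pow]; split_ifs
        · exact Or.inr ⟨i, rfl⟩
        · exact Or.inl rfl
      · rw [coeff_C_mul_X_pow, if_neg (by omega)]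
      · rw [wordB_cons, wordB_nil, eval_mul, eval_C, eval_pow, eval_X]; ring
    · have h1 := wordP_pos p hp σ hσ
      have h2 := hp i
      obtain ⟨Q, hQ1, hQ2, hQ3⟩ := ih (N - p i) (by omega)
      refine ⟨C (b i) * X ^ N + Q, fun n => ?_, fun n hn => ?_, ?_⟩
      · rw [coeff_add, coeff_C_mul_X_pow]; split_ifs with h
        · rw [hQ2 n (by omega), add_zero]; exact Or.inr ⟨i, rfl⟩
        · rw [zero_add]; exact hQ1 n
      · rw [coeff_add, coeff_C_mul_X_pow, if_neg (by omega), hQ2 n (by omega), add_zero]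
      · rw [eval_add, hQ3, wordB_cons]
        have h3 : lam⁻¹ ^ N = lam⁻¹ ^ (N - p i) * lam⁻¹ ^ p i := by
          rw [← pow_add]; congr 1; omega
        have h4 : lam⁻¹ ^ p i * lam ^ p i = 1 := by
          rw [← mul_pow, inv_mul_cancel₀ hlam0.ne', one_pow]
        simp only [eval_mul, eval_C, eval_pow, eval_X]
        rw [h3]
        linear_combination (-(lam⁻¹ ^ (N - p i) * wordB lam p b σ)) * h4

theorem exists_poly_sub (lam : ℝ) (hlam0 : 0 < lam) (p : Fin m → ℕ)
    (hp : ∀ i, 1 ≤ p i) (b : Fin m → ℝ) (σ τ : List (Fin m)) (N : ℕ)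
    (h1 : wordP p σ ≤ N + 1) (h2 : wordP p τ ≤ N + 1) :
    ∃ Q : ℝ[X], (∀ n, Q.coeff n ∈ BB b) ∧
      Q.eval lam⁻¹ = lam⁻¹ ^ N * (wordB lam p b σ - wordB lam p b τ) := by
  obtain ⟨Q, hQ1, -, hQ3⟩ := exists_poly lam hlam0 p hp b σ N h1
  obtain ⟨Q', hQ1', -, hQ3'⟩ := exists_poly lam hlam0 p hp b τ N h2
  refine ⟨Q - Q', fun n => ⟨_, hQ1 n, _, hQ1' n, coeff_sub _ _ _⟩, ?_⟩
  rw [eval_sub, hQ3', hQ3, mul_sub]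

/-- state associated with a pair of words -/
theorem state_eq (lam : ℝ) (p : Fin m → ℕ) (b : Fin m → ℝ) (A B : List (Fin m)) :
    gmul lam (ginv lam (elem lam p b B)) (elem lam p b A) =
      ((wordP p A : ℤ) - wordP p B,
        lam ^ (-(wordP p B : ℤ)) * (wordB lam p b A - wordB lam p b B)) := by
  simp only [gmul, ginv, elem, Prod.mk.injEq]
  constructor
  · ring
  · ring

theorem state_step (lam : ℝ) (hlam0 : 0 < lam) (p : Fin m → ℕ) (b : Fin m → ℝ)
    (A B α β : List (Fin m)) :
    gmul lam (ginv lam (elem lam p b β))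
      (gmul lam (gmul lam (ginv lam (elem lam p b B)) (elem lam p b A)) (elem lam p b α)) =
    gmul lam (ginv lam (elem lam p b (B ++ β))) (elem lam p b (A ++ α)) := by
  rw [state_eq, state_eq]
  simp only [gmul, ginv, elem, Prod.mk.injEq, wordP_append, wordB_append]
  have h0 := hlam0.ne'
  constructor
  · push_cast; ring
  · push_cast
    rw [neg_add, zpow_add₀ h0, sub_eq_add_neg, zpow_add₀ h0, zpow_natCast, zpow_neg, zpow_neg,
      zpow_natCast, zpow_natCast]
    field_simp
    ring

theorem state_mem (lam : ℝ) (hlam0 : 0 < lam) (hlam1 : lam < 1) (p : Fin m → ℕ)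
    (hp : ∀ i, 1 ≤ p i) (b : Fin m → ℝ) (T : ℕ) (A B u v : List (Fin m)) (hB : B ≠ [])
    (hq : |(wordP p A : ℤ) - wordP p B| ≤ (T : ℤ) - 1)
    (h : elem lam p b (A ++ u) = elem lam p b (B ++ v)) :
    gmul lam (ginv lam (elem lam p b B)) (elem lam p b A) ∈ Xi lam b T := by
  rw [state_eq]
  have hB1 := wordP_pos p hp B hB
  have hq' := abs_le.1 hq
  have h0 := hlam0.ne'
  have hT : 1 ≤ T := by have := abs_nonneg ((wordP p A : ℤ) - wordP p B); omega
  refine ⟨hq, ?_, ?_⟩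
  · obtain ⟨-, h2⟩ := (elem_eq_iff lam p b _ _).1 h
    rw [wordB_append, wordB_append] at h2
    have e : lam ^ (-(wordP p B : ℤ)) * (wordB lam p b A - wordB lam p b B)
        = wordB lam p b v - lam ^ ((wordP p A : ℤ) - wordP p B) * wordB lam p b u := by
      rw [sub_eq_add_neg (wordP p A : ℤ), zpow_add₀ h0, zpow_natCast, zpow_neg, zpow_natCast]
      field_simp
      linarith
    simp only
    rw [e, mul_div_assoc, add_mul, one_mul]
    refine (abs_sub _ _).trans (add_le_add (wordB_bound lam hlam0 hlam1 p hp b v) ?_)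
    rw [abs_mul, abs_of_pos (zpow_pos hlam0 _)]
    refine mul_le_mul ?_ (wordB_bound lam hlam0 hlam1 p hp b u) (abs_nonneg _)
      (zpow_pos hlam0 _).le
    exact zpow_le_zpow_right_of_le_one₀ hlam0 hlam1.le (by omega)
  · obtain ⟨Q, hQ, hQ'⟩ := exists_poly_sub lam hlam0 p hp b A B (T + wordP p B - 2)
      (by omega) (by omega)
    refine ⟨Q, hQ, ?_⟩
    rw [hQ']
    simp only
    rw [← mul_assoc, ← zpow_add₀ h0, inv_pow, ← zpow_natCast, ← zpow_neg]
    congr 2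
    omega

theorem greedy (p : Fin m → ℕ) (T : ℕ) (hT : ∀ i, p i ≤ T) (hT1 : 1 ≤ T) (w : List (Fin m)) :
    ∀ n, n ≤ wordP p w → ∃ ρ ρ', w = ρ ++ ρ' ∧ wordP p ρ ≤ n ∧ n < wordP p ρ + T := by
  induction w with
  | nil => intro n hn; exact ⟨[], [], rfl, by simp [wordP], by rw [wordP_nil] at *; omega⟩
  | cons i w ih =>
    intro n hn
    have := hT i
    rw [wordP_cons] at hn
    by_cases h : n < p i
    · exact ⟨[], i :: w, rfl, by simp [wordP], by rw [wordP_nil]; omega⟩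
    · obtain ⟨ρ, ρ', h1, h2, h3⟩ := ih (n - p i) (by omega)
      exact ⟨i :: ρ, ρ', by rw [h1]; rfl, by rw [wordP_cons]; omega, by rw [wordP_cons]; omega⟩

theorem greedy' (p : Fin m → ℕ) (T : ℕ) (hT : ∀ i, p i ≤ T) (hT1 : 1 ≤ T) (w : List (Fin m)) :
    ∀ n, n ≤ wordP p w → ∃ ρ ρ', w = ρ ++ ρ' ∧ n ≤ wordP p ρ ∧ wordP p ρ < n + T := by
  induction w with
  | nil => intro n hn; exact ⟨[], [], rfl, hn, by rw [wordP_nil] at *; omega⟩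
  | cons i w ih =>
    intro n hn
    have := hT i
    rw [wordP_cons] at hn
    by_cases h : n = 0
    · exact ⟨[], i :: w, rfl, by omega, by rw [wordP_nil]; omega⟩
    by_cases h' : n ≤ p i
    · exact ⟨[i], w, rfl, by rw [wordP_cons, wordP_nil]; omega,
        by rw [wordP_cons, wordP_nil]; omega⟩
    · obtain ⟨ρ, ρ', h1, h2, h3⟩ := ih (n - p i) (by omega)
      exact ⟨i :: ρ, ρ', by rw [h1]; rfl, by rw [wordP_cons]; omega, by rw [wordP_cons]; omega⟩

/-- One step of the splitting procedure. -/
def Step (p : Fin m → ℕ) (T : ℕ) (q : ℤ) (u v : List (Fin m)) : Prop :=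
  ∃ α β u' v' w : List (Fin m), α ++ u' = u ++ w ∧ β ++ v' = v ++ w ∧
    1 ≤ wordP p α ∧ wordP p α ≤ 2 * T - 1 ∧ 1 ≤ wordP p β ∧ wordP p β ≤ 2 * T - 1 ∧
    |q + wordP p α - wordP p β| ≤ (T : ℤ) - 1 ∧
    (u'.length + v'.length < u.length + v.length ∨ (u' = [] ∧ v' = []))

theorem step_nonneg (p : Fin m → ℕ) (hp : ∀ i, 1 ≤ p i) (T : ℕ) (hT : ∀ i, p i ≤ T)
    (l : Fin m) (q : ℕ) (hq : q + 1 ≤ T) (u v : List (Fin m))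
    (h : wordP p u + q = wordP p v) : Step p T q u v := by
  cases u with
  | nil =>
    have h1 := hp l
    have h2 := hT l
    rw [wordP_nil] at h
    have e1 : wordP p [l] = p l := by rw [wordP_cons, wordP_nil]; rfl
    have e2 : wordP p (v ++ [l]) = wordP p v + p l := by rw [wordP_append, e1]
    refine ⟨[l], v ++ [l], [], [], [l], by simp, by simp, ?_, ?_, ?_, ?_, ?_, Or.inr ⟨rfl, rfl⟩⟩
      <;> try rw [e1]
    · omega
    · omega
    · omega
    · omega
    · rw [e2, abs_le]; omega
  | cons a u =>
    have h1 := hp a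
    have h2 := hT a
    rw [wordP_cons] at h
    have e1 : wordP p [a] = p a := by rw [wordP_cons, wordP_nil]; rfl
    obtain ⟨ρ, ρ', r1, r2, r3⟩ := greedy p T hT (by omega) v (p a + q) (by omega)
    by_cases hρ : ρ = []
    · subst hρ
      rw [wordP_nil] at r2 r3
      cases v with
      | nil => rw [wordP_nil] at h; omega
      | cons c v =>
        have h3 := hp c
        have h4 := hT c
        have e2 : wordP p [c] = p c := by rw [wordP_cons, wordP_nil]; rfl
        refine ⟨[a], [c], u, v, [], by simp, by simp, ?_, ?_, ?_, ?_, ?_, Or.inl ?_⟩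
        · omega
        · omega
        · omega
        · omega
        · rw [e1, e2, abs_le]; omega
        · simp only [List.length_cons]; omega
    · have h5 := wordP_pos p hp ρ hρ
      refine ⟨[a], ρ, u, ρ', [], by simp, by simp [r1], ?_, ?_, ?_, ?_, ?_, Or.inl ?_⟩
      · omega
      · omega
      · omega
      · omega
      · rw [e1, abs_le]; omega
      · rw [r1]; simp only [List.length_cons, List.length_append]; omega

theorem step_all (p : Fin m → ℕ) (hp : ∀ i, 1 ≤ p i) (T : ℕ) (hT : ∀ i, p i ≤ T)
    (l : Fin m) (q : ℤ) (hq : |q| ≤ (T : ℤ) - 1) (u v : List (Fin m))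
    (h : (wordP p u : ℤ) + q = wordP p v) : Step p T q u v := by
  have hq' := abs_le.1 hq
  rcases le_total 0 q with h0 | h0
  · obtain ⟨n, rfl⟩ := Int.eq_ofNat_of_zero_le h0
    exact step_nonneg p hp T hT l n (by omega) u v (by omega)
  · obtain ⟨n, hn⟩ := Int.eq_ofNat_of_zero_le (neg_nonneg.2 h0)
    obtain ⟨α, β, u', v', w, a1, a2, a3, a4, a5, a6, a7, a8⟩ :=
      step_nonneg p hp T hT l n (by omega) v u (by omega)
    have a7' := abs_le.1 a7
    refine ⟨β, α, v', u', w, a2, a1, a5, a6, a3, a4, abs_le.2 (by omega), ?_⟩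
    rcases a8 with a8 | a8
    · left; omega
    · right; exact ⟨a8.2, a8.1⟩

theorem recSeq_congr (lam : ℝ) (p : Fin m → ℕ) (b : Fin m → ℝ) (α β α' β' : ℕ → List (Fin m))
    (k : ℕ) (h : ∀ j, j ≤ k → α j = α' j ∧ β j = β' j) :
    recSeq lam p b α β k = recSeq lam p b α' β' k := by
  induction k with
  | zero => simp only [recSeq]; rw [(h 0 le_rfl).1, (h 0 le_rfl).2]
  | succ k ih =>
    simp only [recSeq]
    rw [(h (k + 1) le_rfl).1, (h (k + 1) le_rfl).2, ih fun j hj => h j (by omega)]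

/-- The right-hand side of the theorem. -/
def Chain (lam : ℝ) (p : Fin m → ℕ) (b : Fin m → ℝ) (T : ℕ) : Prop :=
  ∃ M : ℕ, 1 ≤ M ∧ ∃ α β : ℕ → List (Fin m),
        (∀ k : ℕ, k ≤ M → 1 ≤ wordP p (α k) ∧ wordP p (α k) ≤ 2 * T - 1 ∧
          1 ≤ wordP p (β k) ∧ wordP p (β k) ≤ 2 * T - 1) ∧
        (α 0).length = 1 ∧ (β 0).length = 1 ∧ α 0 ≠ β 0 ∧
        recSeq lam p b α β M = ((0 : ℤ), (0 : ℝ)) ∧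
        ∀ k : ℕ, k ≤ M → recSeq lam p b α β k ∈ Xi lam b T

/-- Partial chain ending at the pair of words `(A, B)`. -/
def Partial (lam : ℝ) (p : Fin m → ℕ) (b : Fin m → ℝ) (T : ℕ) (M : ℕ) (A B : List (Fin m)) :
    Prop :=
  ∃ α β : ℕ → List (Fin m),
        (∀ k : ℕ, k ≤ M → 1 ≤ wordP p (α k) ∧ wordP p (α k) ≤ 2 * T - 1 ∧
          1 ≤ wordP p (β k) ∧ wordP p (β k) ≤ 2 * T - 1) ∧
        (α 0).length = 1 ∧ (β 0).length = 1 ∧ α 0 ≠ β 0 ∧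
        recSeq lam p b α β M = gmul lam (ginv lam (elem lam p b B)) (elem lam p b A) ∧
        ∀ k : ℕ, k ≤ M → recSeq lam p b α β k ∈ Xi lam b T

theorem Partial.extend {lam : ℝ} (hlam0 : 0 < lam) {p : Fin m → ℕ} {b : Fin m → ℝ} {T M : ℕ}
    {A B : List (Fin m)} (h : Partial lam p b T M A B) (a c : List (Fin m))
    (h1 : 1 ≤ wordP p a) (h2 : wordP p a ≤ 2 * T - 1)
    (h3 : 1 ≤ wordP p c) (h4 : wordP p c ≤ 2 * T - 1)
    (h5 : gmul lam (ginv lam (elem lam p b (B ++ c))) (elem lam p b (A ++ a)) ∈ Xi lam b T) :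
    Partial lam p b T (M + 1) (A ++ a) (B ++ c) := by
  obtain ⟨α, β, a1, a2, a3, a4, a5, a6⟩ := h
  have hcongr : ∀ k ≤ M, recSeq lam p b (Function.update α (M + 1) a)
      (Function.update β (M + 1) c) k = recSeq lam p b α β k := fun k hk =>
    recSeq_congr _ _ _ _ _ _ _ _ fun j hj => by
      rw [Function.update_of_ne (by omega), Function.update_of_ne (by omega)]; exact ⟨rfl, rfl⟩
  have hlast : recSeq lam p b (Function.update α (M + 1) a)
      (Function.update β (M + 1) c) (M + 1) =
      gmul lam (ginv lam (elem lam p b (B ++ c))) (elem lam p b (A ++ a)) := by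
    rw [recSeq, hcongr M le_rfl, a5, Function.update_self, Function.update_self,
      state_step lam hlam0]
  refine ⟨Function.update α (M + 1) a, Function.update β (M + 1) c, ?_, ?_, ?_, ?_, hlast, ?_⟩
  · intro k hk
    by_cases hk' : k = M + 1
    · subst hk'; rw [Function.update_self, Function.update_self]; exact ⟨h1, h2, h3, h4⟩
    · rw [Function.update_of_ne hk', Function.update_of_ne hk']; exact a1 k (by omega)
  · rw [Function.update_of_ne (by omega)]; exact a2
  · rw [Function.update_of_ne (by omega)]; exact a3
  · rw [Function.update_of_ne (by omega), Function.update_of_ne (by omega)]; exact a4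
  · intro k hk
    by_cases hk' : k = M + 1
    · subst hk'; rw [hlast]; exact h5
    · rw [hcongr k (by omega)]; exact a6 k (by omega)

theorem Partial.finish {lam : ℝ} (hlam0 : 0 < lam) (hlam1 : lam < 1) {p : Fin m → ℕ}
    (hp : ∀ i, 1 ≤ p i) {b : Fin m → ℝ} {T : ℕ} (hT : ∀ i, p i ≤ T) (l : Fin m) (n : ℕ) :
    ∀ (M : ℕ) (A B u v : List (Fin m)), u.length + v.length < n → B ≠ [] →
    Partial lam p b T M A B → |(wordP p A : ℤ) - wordP p B| ≤ (T : ℤ) - 1 →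
    elem lam p b (A ++ u) = elem lam p b (B ++ v) → Chain lam p b T := by
  induction n with
  | zero => intro M A B u v h; omega
  | succ n ih =>
    intro M A B u v hn hB hP hq he
    have he' := he
    rw [elem_eq_iff, wordP_append, wordP_append] at he'
    obtain ⟨α, β, u', v', w, a1, a2, a3, a4, a5, a6, a7, a8⟩ :=
      step_all p hp T hT l _ hq u v (by omega)
    have he2 : elem lam p b ((A ++ α) ++ u') = elem lam p b ((B ++ β) ++ v') := by
      rw [List.append_assoc, List.append_assoc, a1, a2, ← List.append_assoc, ← List.append_assoc]
      rw [elem_eq_iff] at he ⊢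
      rw [wordP_append _ (A ++ u), wordP_append _ (B ++ v), wordB_append _ _ _ (A ++ u),
        wordB_append _ _ _ (B ++ v), he.1, he.2]
      exact ⟨rfl, rfl⟩
    have hq2 : |(wordP p (A ++ α) : ℤ) - wordP p (B ++ β)| ≤ (T : ℤ) - 1 := by
      rw [wordP_append, wordP_append]; push_cast
      convert a7 using 2; ring
    have hB2 : B ++ β ≠ [] := by simp [hB]
    have hP2 := hP.extend hlam0 α β a3 a4 a5 a6
      (state_mem lam hlam0 hlam1 p hp b T _ _ u' v' hB2 hq2 he2)
    rcases a8 with a8 | ⟨rfl, rfl⟩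
    · exact ih (M + 1) (A ++ α) (B ++ β) u' v' (by omega) hB2 hP2 hq2 he2
    · rw [List.append_nil, List.append_nil] at he2
      obtain ⟨α', β', c1, c2, c3, c4, c5, c6⟩ := hP2
      refine ⟨M + 1, by omega, α', β', c1, c2, c3, c4, ?_, c6⟩
      rw [c5, state_eq]
      obtain ⟨d1, d2⟩ := (elem_eq_iff lam p b _ _).1 he2
      rw [d1, d2, sub_self, sub_self, mul_zero]

theorem chain_of_overlap {lam : ℝ} (hlam0 : 0 < lam) (hlam1 : lam < 1) {p : Fin m → ℕ}
    (hp : ∀ i, 1 ≤ p i) {b : Fin m → ℝ} {T : ℕ} (hT : ∀ i, p i ≤ T) (σ : List (Fin m)) :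
    ∀ τ, σ ≠ τ → elem lam p b σ = elem lam p b τ → Chain lam p b T := by
  induction σ with
  | nil =>
    intro τ h1 h2
    rw [elem_eq_iff, wordP_nil] at h2
    have := wordP_pos p hp τ (Ne.symm h1)
    omega
  | cons i σ ih =>
    intro τ h1 h2
    cases τ with
    | nil =>
      rw [elem_eq_iff, wordP_nil] at h2
      have := wordP_pos p hp _ h1
      omega
    | cons j τ =>
      by_cases hij : i = j
      · subst hij
        refine ih τ (fun h => h1 (by rw [h])) ?_
        rw [elem_eq_iff, wordP_cons, wordP_cons, wordB_cons, wordB_cons] at h2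
        rw [elem_eq_iff]
        refine ⟨by omega, ?_⟩
        have := add_right_cancel h2.2
        exact mul_left_cancel₀ (pow_pos hlam0 _).ne' this
      · have hi := hp i
        have hj := hp j
        have hi' := hT i
        have hj' := hT j
        have ei : wordP p [i] = p i := by rw [wordP_cons, wordP_nil]; rfl
        have ej : wordP p [j] = p j := by rw [wordP_cons, wordP_nil]; rfl
        have hq : |(wordP p [i] : ℤ) - wordP p [j]| ≤ (T : ℤ) - 1 := by
          rw [ei, ej, abs_le]; omega
        refine Partial.finish hlam0 hlam1 hp hT i _ 0 [i] [j] σ τ (Nat.lt_succ_self _) (by simp)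
          ?_ hq h2
        refine ⟨fun _ => [i], fun _ => [j], ?_, rfl, rfl, by simpa using hij, rfl, ?_⟩
        · intro k _
          rw [ei, ej]; omega
        · intro k hk
          obtain rfl : k = 0 := by omega
          exact state_mem lam hlam0 hlam1 p hp b T [i] [j] σ τ (by simp) hq h2

/-- Garsia-type finiteness. -/
theorem garsia (θ : ℝ) (h : IsPisot θ) (b : Fin m → ℝ) (hbZ : ∀ i, ∃ z : ℤ, b i = (z : ℝ))
    (D : ℝ) : {x : ℝ | |x| ≤ D ∧ ∃ R : ℝ[X], (∀ n, R.coeff n ∈ BB b) ∧ x = R.eval θ}.Finite := by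
  obtain ⟨h1, h2, h3⟩ := h
  have hB : ∀ x ∈ Bset b, (∃ z : ℤ, (z : ℝ) = x) ∧ |x| ≤ bmax b := by
    rintro x (rfl | ⟨i, rfl⟩)
    · exact ⟨⟨0, by simp⟩, by simpa using bmax_nonneg b⟩
    · obtain ⟨z, hz⟩ := hbZ i
      exact ⟨⟨z, hz.symm⟩, le_bmax b i⟩
  have hBB : ∀ x ∈ BB b, (∃ z : ℤ, (z : ℝ) = x) ∧ |x| ≤ 2 * bmax b := by
    rintro x ⟨u, hu, v, hv, rfl⟩
    obtain ⟨⟨z, rfl⟩, hz⟩ := hB u hu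
    obtain ⟨⟨w, rfl⟩, hw⟩ := hB v hv
    refine ⟨⟨z - w, by push_cast; rfl⟩, (abs_sub _ _).trans (by linarith)⟩
  have hint : IsIntegral ℚ θ := h2.tower_top
  let K := IntermediateField.adjoin ℚ ({θ} : Set ℝ)
  have : FiniteDimensional ℚ K := IntermediateField.adjoin.finiteDimensional hint
  have : NumberField K := { to_charZero := inferInstance, to_finiteDimensional := inferInstance }
  let g : K := IntermediateField.AdjoinSimple.gen ℚ θ
  have hg : algebraMap K ℝ g = θ := IntermediateField.AdjoinSimple.algebraMap_gen ℚ θ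
  have hinj : Function.Injective (algebraMap K ℝ) := (algebraMap K ℝ).injective
  have hgint : IsIntegral ℤ g := by
    rw [← isIntegral_algebraMap_iff (B := ℝ) hinj, hg]; exact h2
  have hgroot : aeval g (minpoly ℤ θ) = 0 := by
    apply hinj
    rw [map_zero, ← aeval_algebraMap_apply, hg, minpoly.aeval]
  obtain ⟨D', hD'⟩ := Finite.exists_le (fun φ : K →+* ℂ => 2 * bmax b * (1 - ‖φ g‖)⁻¹)
  have hfin := NumberField.Embeddings.finite_of_norm_le K ℂ (max D D')
  refine (hfin.image (algebraMap K ℝ)).subset ?_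
  rintro x ⟨hx, R, hR, rfl⟩
  obtain ⟨Z, hZ⟩ : ∃ Z : ℤ[X], Z.map (Int.castRingHom ℝ) = R := by
    have : R ∈ Polynomial.lifts (Int.castRingHom ℝ) := by
      rw [Polynomial.lifts_iff_coeff_lifts]
      intro n
      obtain ⟨z, hz⟩ := (hBB _ (hR n)).1
      exact ⟨z, by simpa using hz⟩
    exact (Polynomial.mem_lifts _).1 this
  have hcoeff : ∀ n, ‖((Z.coeff n : ℤ) : ℂ)‖ ≤ 2 * bmax b := by
    intro n
    have := (hBB _ (hR n)).2
    rw [← hZ, coeff_map] at this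
    rw [Complex.norm_intCast]
    simpa using this
  have hev : R.eval θ = aeval θ Z := by
    rw [← hZ, eval_map, aeval_def]; rfl
  refine ⟨aeval g Z, ⟨?_, ?_⟩, ?_⟩
  · exact (IsIntegral.of_mem_of_fg (Algebra.adjoin ℤ {g}) hgint.fg_adjoin_singleton _
      (aeval_mem_adjoin_singleton ℤ g))
  · intro φ
    have hφ : φ (aeval g Z) = aeval (φ g) Z := by
      have := map_aeval_eq_aeval_map (S := K) (T := ℤ) (U := ℂ) (φ := RingHom.id ℤ) (ψ := φ)
        (RingHom.ext_int _ _) Z g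
      simpa using this
    have hφr : aeval (φ g) (minpoly ℤ θ) = 0 := by
      have := map_aeval_eq_aeval_map (S := K) (T := ℤ) (U := ℂ) (φ := RingHom.id ℤ) (ψ := φ)
        (RingHom.ext_int _ _) (minpoly ℤ θ) g
      rw [hgroot, map_zero] at this
      simpa using this.symm
    rw [hφ]
    by_cases hc : φ g = (θ : ℂ)
    · refine le_trans ?_ (le_max_left _ _)
      rw [hc]
      have : aeval (θ : ℂ) Z = ((aeval θ Z : ℝ) : ℂ) := by
        have := aeval_algebraMap_apply (A := ℝ) ℂ θ Z
        simpa using this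
      rw [this, Complex.norm_real, ← hev]
      exact hx
    · refine le_trans ?_ ((hD' φ).trans (le_max_right _ _))
      have hlt := h3 _ hφr hc
      have hb := bmax_nonneg b
      rw [aeval_eq_sum_range]
      refine (norm_sum_le _ _).trans ?_
      calc ∑ i ∈ Finset.range (Z.natDegree + 1), ‖Z.coeff i • (φ g) ^ i‖
          ≤ ∑ i ∈ Finset.range (Z.natDegree + 1), 2 * bmax b * ‖φ g‖ ^ i := by
            refine Finset.sum_le_sum fun i _ => ?_
            rw [zsmul_eq_mul, norm_mul, norm_pow]
            exact mul_le_mul_of_nonneg_right (hcoeff i) (by positivity)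
        _ = 2 * bmax b * ∑ i ∈ Finset.range (Z.natDegree + 1), ‖φ g‖ ^ i := by
            rw [Finset.mul_sum]
        _ ≤ 2 * bmax b * (1 - ‖φ g‖)⁻¹ := by
            refine mul_le_mul_of_nonneg_left ?_ (by positivity)
            rw [← tsum_geometric_of_lt_one (norm_nonneg _) hlt]
            exact (summable_geometric_of_lt_one (norm_nonneg _) hlt).sum_le_tsum _
              (fun _ _ => by positivity)
  · rw [hev, ← aeval_algebraMap_apply, hg]

/-- Neighbours of the word `κ`. -/
def Nb (lam : ℝ) (p : Fin m → ℕ) (b : Fin m → ℝ) (T : ℕ) (G : ℝ) (κ : List (Fin m)) :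
    Set (List (Fin m)) :=
  {τ | wordP p κ ≤ wordP p τ ∧ wordP p τ < wordP p κ + T ∧
    ∃ x y, |x| < G ∧ |y| < G ∧ SW lam p b τ x = SW lam p b κ y}

theorem Nb_bound {lam : ℝ} (hlam0 : 0 < lam) (hlam1 : lam < 1) (hPisot : IsPisot lam⁻¹)
    {p : Fin m → ℕ} (hp : ∀ i, 1 ≤ p i) {b : Fin m → ℝ} (hbZ : ∀ i, ∃ z : ℤ, b i = (z : ℝ))
    {T : ℕ} (hT1 : 1 ≤ T)
    (hno : ∀ σ τ, elem lam p b σ = elem lam p b τ → σ = τ) (G : ℝ) :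
    ∃ N : ℕ, ∀ κ, (Nb lam p b T G κ).Finite ∧ (Nb lam p b T G κ).ncard ≤ N := by
  have h0 := hlam0.ne'
  obtain ⟨F, hFdef⟩ : ∃ F : Set (ℕ × ℝ), F = (Set.Iio T ×ˢ {x : ℝ | |x| ≤ (2 * G * lam⁻¹ ^ (T - 1)) ∧
      ∃ R : ℝ[X], (∀ n, R.coeff n ∈ BB b) ∧ x = R.eval lam⁻¹}) := ⟨_, rfl⟩
  have hF : F.Finite := by
    rw [hFdef]
    exact (Set.finite_Iio T).prod (garsia lam⁻¹ hPisot b hbZ (2 * G * lam⁻¹ ^ (T - 1)))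
  refine ⟨F.ncard, fun κ => ?_⟩
  let f : List (Fin m) → ℕ × ℝ := fun τ => (wordP p τ - wordP p κ,
    lam⁻¹ ^ (wordP p κ + (T - 1)) * (wordB lam p b τ - wordB lam p b κ))
  have hmaps : ∀ τ ∈ Nb lam p b T G κ, f τ ∈ F := fun τ hτ => by
    obtain ⟨h1, h2, x, y, hx, hy, hxy⟩ := hτ
    rw [hFdef]
    refine ⟨?_, ?_, ?_⟩
    · show wordP p τ - wordP p κ < T
      omega
    · rw [SW_eq, SW_eq] at hxy
      have e : wordB lam p b τ - wordB lam p b κ = lam ^ wordP p κ * y - lam ^ wordP p τ * x := by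
        linarith
      have e2 : |wordB lam p b τ - wordB lam p b κ| ≤ lam ^ wordP p κ * (2 * G) := by
        rw [e]
        refine (abs_sub _ _).trans ?_
        rw [abs_mul, abs_mul, abs_of_pos (pow_pos hlam0 _), abs_of_pos (pow_pos hlam0 _)]
        have e3 : lam ^ wordP p τ ≤ lam ^ wordP p κ := pow_le_pow_of_le_one hlam0.le hlam1.le h1
        have e4 : lam ^ wordP p τ * |x| ≤ lam ^ wordP p κ * G :=
          mul_le_mul e3 hx.le (abs_nonneg _) (pow_pos hlam0 _).le
        have e5 : lam ^ wordP p κ * |y| ≤ lam ^ wordP p κ * G :=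
          mul_le_mul_of_nonneg_left hy.le (pow_pos hlam0 _).le
        linarith
      have hpos : 0 < lam⁻¹ ^ (wordP p κ + (T - 1)) := pow_pos (inv_pos.2 hlam0) _
      show |lam⁻¹ ^ (wordP p κ + (T - 1)) * (wordB lam p b τ - wordB lam p b κ)| ≤ _
      rw [abs_mul, abs_of_pos hpos]
      refine (mul_le_mul_of_nonneg_left e2 hpos.le).trans (le_of_eq ?_)
      have h4 : lam⁻¹ ^ wordP p κ * lam ^ wordP p κ = 1 := by
        rw [← mul_pow, inv_mul_cancel₀ hlam0.ne', one_pow]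
      rw [pow_add]
      linear_combination (lam⁻¹ ^ (T - 1) * (2 * G)) * h4
    · obtain ⟨Q, hQ, hQ'⟩ := exists_poly_sub lam hlam0 p hp b τ κ (wordP p κ + (T - 1))
        (by omega) (by omega)
      exact ⟨Q, hQ, hQ'.symm⟩
  have hinj : Set.InjOn f (Nb lam p b T G κ) := by
    rintro τ ⟨h1, -⟩ τ' ⟨h1', -⟩ he
    apply hno
    rw [elem_eq_iff]
    obtain ⟨e1, e2⟩ := Prod.ext_iff.1 he
    have hpos : 0 < lam⁻¹ ^ (wordP p κ + (T - 1)) := pow_pos (inv_pos.2 hlam0) _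
    have e3 := mul_left_cancel₀ hpos.ne' e2
    have e4 : wordP p τ - wordP p κ = wordP p τ' - wordP p κ := e1
    exact ⟨by omega, by linarith⟩
  exact ⟨Set.Finite.of_injOn hmaps hinj hF, Set.ncard_le_ncard_of_injOn f hmaps hinj hF⟩

theorem osc_of_no_overlap {lam : ℝ} (hlam0 : 0 < lam) (hlam1 : lam < 1) (hPisot : IsPisot lam⁻¹)
    {p : Fin m → ℕ} (hp : ∀ i, 1 ≤ p i) {b : Fin m → ℝ} (hbZ : ∀ i, ∃ z : ℤ, b i = (z : ℝ))
    {T : ℕ} (hT1 : 1 ≤ T) (hT : ∀ i, p i ≤ T)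
    (hno : ∀ σ τ, elem lam p b σ = elem lam p b τ → σ = τ) : OSC lam p b := by
  have hl : 0 < 1 - lam := by linarith
  obtain ⟨G, hG0, hG⟩ : ∃ G : ℝ, 0 < G ∧ bmax b ≤ (1 - lam) * G := by
    refine ⟨bmax b / (1 - lam) + 1, ?_, ?_⟩
    · have := div_nonneg (bmax_nonneg b) hl.le; linarith
    · rw [mul_add, mul_div_cancel₀ _ hl.ne']; linarith
  obtain ⟨N, hN⟩ := Nb_bound hlam0 hlam1 hPisot hp hbZ hT1 hno G
  obtain ⟨κ, hκ⟩ : ∃ κ, ∀ κ', (Nb lam p b T G κ').ncard ≤ (Nb lam p b T G κ).ncard := by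
    have hbdd : BddAbove (Set.range fun κ => (Nb lam p b T G κ).ncard) :=
      ⟨N, by rintro _ ⟨κ, rfl⟩; exact (hN κ).2⟩
    obtain ⟨κ, hκ⟩ := Nat.sSup_mem (Set.range_nonempty _) hbdd
    exact ⟨κ, fun κ' => by
      have := le_csSup hbdd ⟨κ', rfl⟩
      rw [← hκ] at this
      exact this⟩
  have key : ∀ σ, ∀ ρ ∈ Nb lam p b T G (σ ++ κ), ∃ τ, ρ = σ ++ τ := by
    intro σ ρ hρ
    have hsub : (fun τ => σ ++ τ) '' Nb lam p b T G κ ⊆ Nb lam p b T G (σ ++ κ) := by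
      rintro _ ⟨τ, ⟨h1, h2, x, y, hx, hy, hxy⟩, rfl⟩
      refine ⟨?_, ?_, x, y, hx, hy, ?_⟩
      · rw [wordP_append, wordP_append]; omega
      · rw [wordP_append, wordP_append]; omega
      · rw [SW_append, SW_append, hxy]
    have heq := Set.eq_of_subset_of_ncard_le hsub (by
      rw [Set.ncard_image_of_injective _ (List.append_right_injective σ)]
      exact hκ _) (hN _).1
    rw [← heq] at hρ
    obtain ⟨τ, -, rfl⟩ := hρ
    exact ⟨τ, rfl⟩
  have disj : ∀ (i j : Fin m) (σ τ : List (Fin m)) (x y : ℝ), i ≠ j → |x| < G → |y| < G →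
      wordP p (i :: σ ++ κ) ≤ wordP p (j :: τ ++ κ) →
      SW lam p b (i :: σ ++ κ) x = SW lam p b (j :: τ ++ κ) y → False := by
    intro i j σ τ x y hij hx hy hle he
    obtain ⟨ρ, ρ', r1, r2, r3⟩ := greedy' p T hT hT1 _ _ hle
    have hmem : ρ ∈ Nb lam p b T G (i :: σ ++ κ) := by
      refine ⟨r2, r3, SW lam p b ρ' y, x, SW_bound lam hlam0 hlam1 p hp b G hG _ _ hy, hx, ?_⟩
      rw [← SW_append, ← r1, he]
    obtain ⟨τ', rfl⟩ := key _ _ hmem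
    simp only [List.cons_append, List.cons.injEq] at r1
    exact hij r1.1.symm
  refine ⟨⋃ σ : List (Fin m), SW lam p b (σ ++ κ) '' {x | |x| < G}, ?_, ?_, ?_, ?_⟩
  · exact ⟨_, Set.mem_iUnion.2 ⟨[], 0, by simpa using hG0, rfl⟩⟩
  · refine isOpen_iUnion fun σ => ?_
    have hfun : SW lam p b (σ ++ κ) =
        fun x => lam ^ wordP p (σ ++ κ) * x + wordB lam p b (σ ++ κ) :=
      funext fun x => SW_eq lam p b _ x
    have hopen : IsOpen {x : ℝ | |x| < G} := isOpen_lt continuous_abs continuous_const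
    rw [hfun]
    have hne : lam ^ wordP p (σ ++ κ) ≠ 0 := (pow_pos hlam0 _).ne'
    exact ((Homeomorph.mulLeft₀ _ hne).trans
      (Homeomorph.addRight (wordB lam p b (σ ++ κ)))).isOpenMap _ hopen
  · refine Set.iUnion_subset fun i => ?_
    rintro _ ⟨z, hz, rfl⟩
    obtain ⟨σ, x, hx, rfl⟩ := Set.mem_iUnion.1 hz
    exact Set.mem_iUnion.2 ⟨i :: σ, x, hx, rfl⟩
  · intro i j hij
    rw [Set.eq_empty_iff_forall_notMem]
    rintro w ⟨⟨z, hz, hzw⟩, ⟨z', hz', hzw'⟩⟩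
    obtain ⟨σ, x, hx, rfl⟩ := Set.mem_iUnion.1 hz
    obtain ⟨τ, y, hy, rfl⟩ := Set.mem_iUnion.1 hz'
    have e : SW lam p b (i :: σ ++ κ) x = SW lam p b (j :: τ ++ κ) y := hzw.trans hzw'.symm
    rcases le_total (wordP p (i :: σ ++ κ)) (wordP p (j :: τ ++ κ)) with h | h
    · exact disj i j σ τ x y hij hx hy h e
    · exact disj j i τ σ y x hij.symm hy hx h e.symm

theorem recSeq_words {lam : ℝ} (hlam0 : 0 < lam) (p : Fin m → ℕ) (b : Fin m → ℝ)
    (α β : ℕ → List (Fin m)) (k : ℕ) : ∃ u v, recSeq lam p b α β k =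
      gmul lam (ginv lam (elem lam p b (β 0 ++ v))) (elem lam p b (α 0 ++ u)) := by
  induction k with
  | zero => exact ⟨[], [], by simp [recSeq]⟩
  | succ k ih =>
    obtain ⟨u, v, h⟩ := ih
    refine ⟨u ++ α (k + 1), v ++ β (k + 1), ?_⟩
    rw [recSeq, h, state_step lam hlam0, List.append_assoc, List.append_assoc]

theorem SW_maps {lam : ℝ} {p : Fin m → ℕ} {b : Fin m → ℝ} {U : Set ℝ}
    (hU : (⋃ i, Smap lam p b i '' U) ⊆ U) (σ : List (Fin m)) (x : ℝ) (hx : x ∈ U) :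
    SW lam p b σ x ∈ U := by
  induction σ with
  | nil => exact hx
  | cons i σ ih => exact hU (Set.mem_iUnion.2 ⟨i, _, ih, rfl⟩)

theorem not_osc_of_chain {lam : ℝ} (hlam0 : 0 < lam) {p : Fin m → ℕ} {b : Fin m → ℝ} {T : ℕ}
    (h : Chain lam p b T) : ¬ OSC lam p b := by
  rintro ⟨U, ⟨x, hx⟩, -, hU, hd⟩
  obtain ⟨M, -, α, β, -, h1, h2, h3, h4, -⟩ := h
  obtain ⟨u, v, h5⟩ := recSeq_words hlam0 p b α β M
  obtain ⟨i, hi⟩ := List.length_eq_one_iff.1 h1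
  obtain ⟨j, hj⟩ := List.length_eq_one_iff.1 h2
  rw [hi, hj] at h5
  rw [h4, state_eq] at h5
  obtain ⟨e1, e2⟩ := Prod.ext_iff.1 h5
  simp only at e1 e2
  have e3 : wordP p ([i] ++ u) = wordP p ([j] ++ v) := by omega
  have e4 : wordB lam p b ([i] ++ u) = wordB lam p b ([j] ++ v) := by
    rcases mul_eq_zero.1 e2.symm with h | h
    · exact absurd h (zpow_pos hlam0 _).ne'
    · linarith
  have e5 : SW lam p b ([i] ++ u) x = SW lam p b ([j] ++ v) x := by
    rw [SW_eq, SW_eq, e3, e4]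
  have hij : i ≠ j := fun h => h3 (by rw [hi, hj, h])
  have : SW lam p b ([i] ++ u) x ∈ Smap lam p b i '' U ∩ Smap lam p b j '' U :=
    ⟨⟨_, SW_maps hU u x hx, rfl⟩, by rw [e5]; exact ⟨_, SW_maps hU v x hx, rfl⟩⟩
  rw [hd i j hij] at this
  exact this

theorem stmt10 (lam : ℝ) (hlam0 : 0 < lam) (hlam1 : lam < 1)
    (hPisot : IsPisot lam⁻¹)
    {m : ℕ} (hm : 2 ≤ m) (p : Fin m → ℕ) (hp : ∀ i, 1 ≤ p i)
    (b : Fin m → ℝ) (hbZ : ∀ i, ∃ z : ℤ, b i = (z : ℝ))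
    (T : ℕ) (hT : T = Finset.univ.sup p) :
    ¬ OSC lam p b ↔
      ∃ M : ℕ, 1 ≤ M ∧ ∃ α β : ℕ → List (Fin m),
        (∀ k : ℕ, k ≤ M → 1 ≤ wordP p (α k) ∧ wordP p (α k) ≤ 2 * T - 1 ∧
          1 ≤ wordP p (β k) ∧ wordP p (β k) ≤ 2 * T - 1) ∧
        (α 0).length = 1 ∧ (β 0).length = 1 ∧ α 0 ≠ β 0 ∧
        recSeq lam p b α β M = ((0 : ℤ), (0 : ℝ)) ∧
        ∀ k : ℕ, k ≤ M → recSeq lam p b α β k ∈ Xi lam b T := by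
  have hT' : ∀ i, p i ≤ T := fun i => by rw [hT]; exact Finset.le_sup (Finset.mem_univ i)
  have hT1 : 1 ≤ T := (hp ⟨0, by omega⟩).trans (hT' _)
  constructor
  · intro h
    by_contra hc
    refine h (osc_of_no_overlap hlam0 hlam1 hPisot hp hbZ hT1 hT' fun σ τ he => ?_)
    by_contra hne
    exact hc (chain_of_overlap hlam0 hlam1 hp hT' σ τ hne he)
  · intro h
    exact not_osc_of_chain hlam0 h

end PVOSC
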